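/- Let B > 0, L > 0, and let h : ℝ → ℝ be continuous with h(y) < 0 for all y ∈ (0, L). Then ∫₀^L [ √(max((2√E − By + h(y))·(By − h(y)), 0)) − √(max((2√E − By)·By, 0)) ] dy → +∞ as E → +∞. -/

import Mathlib

open Filter

/-!
With `S = √E`, the function `√((2 * S - t) * t)` is bounded by `√(2 * t) * √S`, and its quotient
by `√S` tends to `√(2 * t)` as `S → ∞`. By dominated convergence, the phase-integral difference
between `u y = B * y - h y` and `v y = B * y`, divided by `√S = E ^ (1 / 4)`, tends to
`∫ √(2 * u y) - ∫ √(2 * v y)`, which is positive because `0 < u` and `v < u`.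

Since `Real.sqrt` vanishes on negative numbers, the truncations `max _ 0` under the roots change
nothing, and the bound holds for negative `t` as well.
-/

section

open MeasureTheory Set Topology

lemma sqrt_max_zero (x : ℝ) : √(max x 0) = √x := by
  rcases le_total x 0 with hx | hx
  · rw [max_eq_right hx, Real.sqrt_zero, Real.sqrt_eq_zero_of_nonpos hx]
  · rw [max_eq_left hx]

lemma sqrt_two_mul_sub_mul_le {S : ℝ} (hS : 0 ≤ S) (t : ℝ) :
    √((2 * S - t) * t) ≤ √(2 * t) * √S := by
  rw [← Real.sqrt_mul' (2 * t) hS]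
  exact Real.sqrt_le_sqrt (by linarith [mul_self_nonneg t])

lemma tendsto_sqrt_two_mul_sub_mul_div_sqrt (t : ℝ) :
    Tendsto (fun S : ℝ => √((2 * S - t) * t) / √S) atTop (𝓝 √(2 * t)) := by
  have h_lim : Tendsto (fun S : ℝ => (2 - t / S) * t) atTop (𝓝 (2 * t)) := by
    simpa only [id_eq, sub_zero] using
      ((tendsto_const_nhds (x := (2 : ℝ))).sub (tendsto_id.const_div_atTop t)).mul_const t
  refine h_lim.sqrt.congr' ?_
  filter_upwards [eventually_gt_atTop 0] with S hS
  rw [← Real.sqrt_div' _ hS.le]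
  congr 1
  field_simp

section MeasureSpace

variable {α : Type*} [MeasurableSpace α] {μ : Measure α} {u v : α → ℝ}

lemma integrable_sqrt_two_mul_sub_mul (hu : AEMeasurable u μ)
    (hu_int : Integrable (fun x => √(2 * u x)) μ) {S : ℝ} (hS : 0 ≤ S) :
    Integrable (fun x => √((2 * S - u x) * u x)) μ := by
  refine (hu_int.mul_const √S).mono' (by fun_prop) (.of_forall fun x => ?_)
  rw [Real.norm_of_nonneg (Real.sqrt_nonneg _)]
  exact sqrt_two_mul_sub_mul_le hS (u x)

lemma tendsto_integral_sqrt_two_mul_sub_mul_div_sqrt (hu : AEMeasurable u μ)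
    (hu_int : Integrable (fun x => √(2 * u x)) μ) :
    Tendsto (fun S : ℝ => (∫ x, √((2 * S - u x) * u x) ∂μ) / √S) atTop
      (𝓝 (∫ x, √(2 * u x) ∂μ)) := by
  simp only [← integral_div]
  refine tendsto_integral_filter_of_dominated_convergence _ ?_ ?_ hu_int
    (.of_forall fun x => tendsto_sqrt_two_mul_sub_mul_div_sqrt (u x))
  · exact .of_forall fun S => by fun_prop
  · filter_upwards [eventually_ge_atTop 0] with S hS
    refine .of_forall fun x => ?_
    rw [Real.norm_of_nonneg (by positivity)]
    exact div_le_of_le_mul₀ (Real.sqrt_nonneg S) (Real.sqrt_nonneg _)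
      (sqrt_two_mul_sub_mul_le hS (u x))

lemma tendsto_integral_sqrt_sub_sqrt_div_sqrt
    (hu : AEMeasurable u μ) (hu_int : Integrable (fun x => √(2 * u x)) μ)
    (hv : AEMeasurable v μ) (hv_int : Integrable (fun x => √(2 * v x)) μ) :
    Tendsto
      (fun S : ℝ => (∫ x, (√((2 * S - u x) * u x) - √((2 * S - v x) * v x)) ∂μ) / √S)
      atTop (𝓝 (∫ x, (√(2 * u x) - √(2 * v x)) ∂μ)) := by
  rw [integral_sub hu_int hv_int]
  refine ((tendsto_integral_sqrt_two_mul_sub_mul_div_sqrt hu hu_int).sub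
    (tendsto_integral_sqrt_two_mul_sub_mul_div_sqrt hv hv_int)).congr' ?_
  filter_upwards [eventually_ge_atTop 0] with S hS
  rw [integral_sub (integrable_sqrt_two_mul_sub_mul hu hu_int hS)
    (integrable_sqrt_two_mul_sub_mul hv hv_int hS), sub_div]

lemma tendsto_integral_sqrt_sub_sqrt_atTop
    (hu : AEMeasurable u μ) (hu_int : Integrable (fun x => √(2 * u x)) μ)
    (hv : AEMeasurable v μ) (hv_int : Integrable (fun x => √(2 * v x)) μ)
    (h_pos : 0 < ∫ x, (√(2 * u x) - √(2 * v x)) ∂μ) :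
    Tendsto (fun S : ℝ => ∫ x, (√((2 * S - u x) * u x) - √((2 * S - v x) * v x)) ∂μ)
      atTop atTop := by
  refine ((tendsto_integral_sqrt_sub_sqrt_div_sqrt hu hu_int hv hv_int).pos_mul_atTop h_pos
    Real.tendsto_sqrt_atTop).congr' ?_
  filter_upwards [eventually_gt_atTop 0] with S hS
  exact div_mul_cancel₀ _ (Real.sqrt_pos.2 hS).ne'

end MeasureSpace

theorem stmt_15_general {a b : ℝ} (hab : a < b) {u v : ℝ → ℝ}
    (hu : ContinuousOn u (Icc a b)) (hv : ContinuousOn v (Icc a b))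
    (hu_pos : ∀ y ∈ Ioo a b, 0 < u y) (hvu : ∀ y ∈ Ioo a b, v y < u y) :
    Tendsto (fun E : ℝ => ∫ y in a..b,
        (√(max ((2 * √E - u y) * u y) 0) - √(max ((2 * √E - v y) * v y) 0)))
      atTop atTop := by
  have aemeasurable {w : ℝ → ℝ} (hw : ContinuousOn w (Icc a b)) :
      AEMeasurable w (volume.restrict (Ioc a b)) :=
    (hw.mono Ioc_subset_Icc_self).aemeasurable measurableSet_Ioc
  have integrable {w : ℝ → ℝ} (hw : ContinuousOn w (Icc a b)) :
      IntegrableOn (fun y => √(2 * w y)) (Ioc a b) :=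
    (ContinuousOn.integrableOn_Icc (by fun_prop)).mono_set Ioc_subset_Icc_self
  have limit_pos : 0 < ∫ y in a..b, (√(2 * u y) - √(2 * v y)) := by
    refine intervalIntegral.intervalIntegral_pos_of_pos_on ?_ (fun y hy => ?_) hab
    · exact ContinuousOn.intervalIntegrable_of_Icc hab.le (by fun_prop)
    · have hu_y := hu_pos y hy
      exact sub_pos.2 ((Real.sqrt_lt_sqrt_iff_of_pos (by positivity)).2 (by linarith [hvu y hy]))
  simp only [sqrt_max_zero, intervalIntegral.integral_of_le hab.le] at limit_pos ⊢
  exact (tendsto_integral_sqrt_sub_sqrt_atTop (aemeasurable hu) (integrable hu)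
    (aemeasurable hv) (integrable hv) limit_pos).comp Real.tendsto_sqrt_atTop

end

/-- Zero-mean example of Section 3.2: divergence of the phase-integral
difference for continuous h < 0 on (0, L). -/
theorem stmt_15 (B L : ℝ) (hB : 0 < B) (hL : 0 < L)
    (h : ℝ → ℝ) (hcont : Continuous h) (hneg : ∀ y ∈ Set.Ioo 0 L, h y < 0) :
    Tendsto (fun E : ℝ =>
        ∫ y in (0 : ℝ)..L,
          (Real.sqrt (max ((2 * Real.sqrt E - B * y + h y) * (B * y - h y)) 0) -
            Real.sqrt (max ((2 * Real.sqrt E - B * y) * (B * y)) 0)))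
      atTop atTop := by
  simpa only [sub_add] using
    stmt_15_general (u := fun y => B * y - h y) (v := fun y => B * y) hL (by fun_prop)
      (by fun_prop) (fun y hy => by linarith [mul_pos hB hy.1, hneg y hy])
      (fun y hy => by linarith [hneg y hy])
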